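/- Let q² be a primitive N-th root of unity with N even. Every irreducible finite-dimensional representation of the Chekhov-Fock algebra 𝒯_λ^q of an ideal triangulation of a genus g surface with p punctures has dimension N^{3g+p-3}/2^g. -/

import Mathlib

/-- A combinatorial model (oriented combinatorial map) of an ideal triangulation of a closed
orientable surface of genus `g` with `p` punctures, having `n` edges.  The darts `D` are the
corners (spikes) of the triangles; `φ` is the rotation moving counterclockwise to the next
corner of the same triangle (faces are triangles), `α` is the fixed-point-free involution
pairing the two sides of each edge, `edge` labels each dart by the edge of the triangulation
on its left, and `vert` records the puncture towards which the spike converges (orbits of the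
vertex rotation `φ ∘ α`).  Connectivity and the Euler relation `p - n + F = 2 - 2g` make this
the triangulation of the genus `g` surface with `p` punctures. -/
structure IdealTriangulation (g p n : ℕ) where
  D : Type
  [fintypeD : Fintype D]
  [decEqD : DecidableEq D]
  α : Equiv.Perm D
  φ : Equiv.Perm D
  α_invol : ∀ d, α (α d) = d
  α_fpf : ∀ d, α d ≠ d
  φ_triangles : ∀ d, φ (φ (φ d)) = d
  φ_fpf : ∀ d, φ d ≠ d
  edge : D → Fin n
  edge_surj : Function.Surjective edge
  edge_fiber : ∀ d d', edge d = edge d' ↔ (d' = d ∨ d' = α d)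
  vert : D → Fin p
  vert_surj : Function.Surjective vert
  vert_rot : ∀ d, vert (φ (α d)) = vert d
  vert_orbit : ∀ d d', vert d = vert d' → ∃ k : ℕ, ((α.trans φ) ^ k) d = d'
  connected : ∀ d d', ∃ w ∈ Subgroup.closure ({α, φ} : Set (Equiv.Perm D)), w d = d'
  card_darts : Fintype.card D = 2 * n
  euler : (p : ℤ) - (n : ℤ) + (Fintype.card D : ℤ) / 3 = 2 - 2 * (g : ℤ)

attribute [instance] IdealTriangulation.fintypeD IdealTriangulation.decEqD

/-- The number `a_ij` of spikes delimited on the left by edge `i` and on the right by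
edge `j`. -/
noncomputable def IdealTriangulation.spikeCount {g p n : ℕ} (T : IdealTriangulation g p n)
    (i j : Fin n) : ℕ :=
  (Finset.univ.filter (fun d => T.edge d = i ∧ T.edge (T.φ d) = j)).card

/-- The Weil–Petersson matrix `σ_ij = a_ij - a_ji` of an ideal triangulation. -/
noncomputable def IdealTriangulation.wpMatrix {g p n : ℕ} (T : IdealTriangulation g p n) :
    Matrix (Fin n) (Fin n) ℤ :=
  Matrix.of fun i j => (T.spikeCount i j : ℤ) - (T.spikeCount j i : ℤ)


/-- The bilinear Weil–Petersson form `σ(α, β) = Σ_{i,j} α_i σ_ij β_j` on `ℤⁿ`. -/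
noncomputable def IdealTriangulation.wpForm {g p n : ℕ} (T : IdealTriangulation g p n)
    (x y : Fin n → ℤ) : ℤ :=
  ∑ i : Fin n, ∑ j : Fin n, x i * T.wpMatrix i j * y j

/-- `k_{ij} ∈ {0,1,2}` is the number of ends of the edge `λ_j` converging to the `i`-th
puncture. -/
noncomputable def IdealTriangulation.endCount {g p n : ℕ} (T : IdealTriangulation g p n)
    (i : Fin p) (j : Fin n) : ℕ :=
  (Finset.univ.filter (fun d => T.vert d = i ∧ T.edge d = j)).card

/-- The family of `p` vectors generating the kernel of the Weil–Petersson form: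
the vectors `(k_{i1}, …, k_{in})` for `i = 1, …, p-1` together with `(1, 1, …, 1)`. -/
noncomputable def IdealTriangulation.kerGens {g p n : ℕ} (T : IdealTriangulation g p n)
    (i : Fin p) : Fin n → ℤ :=
  if i.val + 1 < p then (fun j => (T.endCount i j : ℤ)) else (fun _ => 1)

open FreeAlgebra in
/-- The defining relations of the quantum torus (Chekhov–Fock algebra): generators
`X_i` (`Sum.inl i`) and their inverses `X_i⁻¹` (`Sum.inr i`), subject to
`X_i X_j = q^(2 σ_ij) X_j X_i` and `X_i X_i⁻¹ = X_i⁻¹ X_i = 1`. -/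
inductive QTRel (n : ℕ) (q : ℂ) (σ : Fin n → Fin n → ℤ) :
    FreeAlgebra ℂ (Fin n ⊕ Fin n) → FreeAlgebra ℂ (Fin n ⊕ Fin n) → Prop
  | comm (i j : Fin n) : QTRel n q σ (ι ℂ (Sum.inl i) * ι ℂ (Sum.inl j))
      ((q ^ (2 * σ i j) : ℂ) • (ι ℂ (Sum.inl j) * ι ℂ (Sum.inl i)))
  | mul_inv (i : Fin n) : QTRel n q σ (ι ℂ (Sum.inl i) * ι ℂ (Sum.inr i)) 1
  | inv_mul (i : Fin n) : QTRel n q σ (ι ℂ (Sum.inr i) * ι ℂ (Sum.inl i)) 1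

/-- The quantum torus `𝒯` with parameters `q` and `σ`: the `ℂ`-algebra generated by
`X_1^{±1}, …, X_n^{±1}` with relations `X_i X_j = q^(2 σ_ij) X_j X_i`. -/
abbrev QuantumTorus (n : ℕ) (q : ℂ) (σ : Fin n → Fin n → ℤ) :=
  RingQuot (QTRel n q σ)

/-- The generator `X_i` of the quantum torus. -/
noncomputable def QuantumTorus.X {n : ℕ} {q : ℂ} {σ : Fin n → Fin n → ℤ} (i : Fin n) :
    QuantumTorus n q σ :=
  RingQuot.mkAlgHom ℂ (QTRel n q σ) (FreeAlgebra.ι ℂ (Sum.inl i))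

/-- The generator `X_i⁻¹` of the quantum torus. -/
noncomputable def QuantumTorus.Xinv {n : ℕ} {q : ℂ} {σ : Fin n → Fin n → ℤ} (i : Fin n) :
    QuantumTorus n q σ :=
  RingQuot.mkAlgHom ℂ (QTRel n q σ) (FreeAlgebra.ι ℂ (Sum.inr i))

/-- `X_i^k` for an integer exponent `k ∈ ℤ`. -/
noncomputable def QuantumTorus.Xzpow {n : ℕ} {q : ℂ} {σ : Fin n → Fin n → ℤ} (i : Fin n)
    (k : ℤ) : QuantumTorus n q σ :=
  if 0 ≤ k then (QuantumTorus.X i) ^ k.toNat else (QuantumTorus.Xinv i) ^ (-k).toNat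

/-- The monomial `X_1^{k_1} X_2^{k_2} ⋯ X_n^{k_n}` of the quantum torus. -/
noncomputable def QuantumTorus.monomial {n : ℕ} {q : ℂ} {σ : Fin n → Fin n → ℤ}
    (k : Fin n → ℤ) : QuantumTorus n q σ :=
  ((List.finRange n).map (fun i => QuantumTorus.Xzpow i (k i))).prod

/-- The Chekhov–Fock algebra `𝒯_λ^q` of an ideal triangulation `λ`: the quantum torus with
skew-commutation exponents given by the Weil–Petersson matrix `σ` of `λ`. -/
noncomputable abbrev ChekhovFock {g p n : ℕ} (T : IdealTriangulation g p n) (q : ℂ) :=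
  QuantumTorus n q (fun i j => T.wpMatrix i j)

/-- A representation `ρ : A → End(V)` is irreducible if `V ≠ 0` and the only invariant
subspaces are `0` and `V`. -/
def IsIrreducibleRep {A V : Type*} [Ring A] [Algebra ℂ A] [AddCommGroup V] [Module ℂ V]
    (ρ : A →ₐ[ℂ] Module.End ℂ V) : Prop :=
  (∃ v : V, v ≠ 0) ∧
    ∀ W : Submodule ℂ V, (∀ (a : A), ∀ w ∈ W, ρ a w ∈ W) → W = ⊥ ∨ W = ⊤

theorem cf_burnside {V : Type*} [AddCommGroup V] [Module ℂ V] [FiniteDimensional ℂ V]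
    (B : Subalgebra ℂ (Module.End ℂ V)) (hne : ∃ v : V, v ≠ 0)
    (h : ∀ W : Submodule ℂ V, (∀ b ∈ B, ∀ w ∈ W, b w ∈ W) → W = ⊥ ∨ W = ⊤) : B = ⊤ := by
  classical
  have : Nontrivial V := ⟨hne.choose, 0, hne.choose_spec⟩
  have hs : IsSimpleModule B V := by
    rw [isSimpleModule_iff]
    refine { eq_bot_or_eq_top := fun W => ?_ }
    rcases h (W.restrictScalars ℂ) (fun b hb w hw => W.smul_mem ⟨b, hb⟩ hw) with h | h
    · left; exact (Submodule.restrictScalars_eq_bot_iff ..).1 h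
    · right; exact (Submodule.restrictScalars_eq_top_iff ..).1 h
  have hsch := (IsSimpleModule.algebraMap_end_bijective_of_isAlgClosed (A := B) (V := V) ℂ).2
  rw [eq_top_iff]
  intro f _
  let F : Module.End (Module.End B V) V :=
    { toFun := f
      map_add' := map_add f
      map_smul' := by
        intro g m
        obtain ⟨c, rfl⟩ := hsch g
        exact map_smul f c m }
  let b := Module.finBasis ℂ V
  obtain ⟨r, hr⟩ := jacobson_density (R := B) F (Finset.univ.image b)
  have : f = r := by
    apply b.ext
    intro i
    exact hr (b i) (Finset.mem_image_of_mem _ (Finset.mem_univ i))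
  rw [this]
  exact r.2

theorem cf_scalar {V : Type*} [AddCommGroup V] [Module ℂ V] [FiniteDimensional ℂ V]
    (A : Module.End ℂ V) (h : ∀ B : Module.End ℂ V, B * A = A * B) :
    ∃ c : ℂ, A = c • 1 := by
  have h1 : A ∈ Subalgebra.center ℂ (Module.End ℂ V) := by
    rw [Subalgebra.mem_center_iff]; exact h
  have h2 := Algebra.IsCentral.out (K := ℂ) (D := Module.End ℂ V) h1
  rw [Algebra.mem_bot] at h2
  obtain ⟨c, hc⟩ := h2
  exact ⟨c, by rw [← hc, Algebra.algebraMap_eq_smul_one]⟩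

/-- Abstract dimension count. `u j` are invertible operators with
`u j * u i = e (s i j) • (u i * u j)`. -/
theorem cf_dim {V : Type*} [AddCommGroup V] [Module ℂ V] [FiniteDimensional ℂ V]
    {n N : ℕ} [NeZero N] (e : AddChar (ZMod N) ℂ) (he : Function.Injective e)
    (u : Fin n → (Module.End ℂ V)ˣ)
    (M : (Fin n → ZMod N) →+ (Fin n → ZMod N))
    (hu : ∀ i j, (u j : Module.End ℂ V) * u i = e (M (Pi.single i 1) j) • ((u i : Module.End ℂ V) * u j))
    (hne : ∃ v : V, v ≠ 0)
    (hirr : ∀ W : Submodule ℂ V, (∀ j, ∀ w ∈ W, (u j : Module.End ℂ V) w ∈ W) →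
       (∀ j, ∀ w ∈ W, (↑(u j)⁻¹ : Module.End ℂ V) w ∈ W) → W = ⊥ ∨ W = ⊤) :
    Module.finrank ℂ V ^ 2 = Nat.card M.range := by
  classical
  let H : Subgroup (Module.End ℂ V)ˣ := Subgroup.closure (Set.range u)
  have hH : ∀ j, u j ∈ H := fun j => Subgroup.subset_closure ⟨j, rfl⟩
  -- the pairs
  let P : (Module.End ℂ V)ˣ → (Fin n → ZMod N) → Prop := fun h y =>
    ∀ j, (u j : Module.End ℂ V) * h = e (y j) • ((h : Module.End ℂ V) * u j)
  have P1 : P 1 0 := by intro j; simp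
  have Pmul : ∀ h y h' y', P h y → P h' y' → P (h * h') (y + y') := by
    intro h y h' y' p p' j
    rw [Units.val_mul, ← mul_assoc, p j, smul_mul_assoc, mul_assoc, p' j, Pi.add_apply,
      AddChar.map_add_eq_mul, mul_smul_comm, smul_smul, mul_assoc]
  have Pinv : ∀ h y, P h y → P h⁻¹ (-y) := by
    intro h y p j
    have := p j
    have h2 : (↑h⁻¹ : Module.End ℂ V) * (u j * h) * ↑h⁻¹ =
      e (y j) • (↑h⁻¹ * ((h : Module.End ℂ V) * u j) * ↑h⁻¹) := by rw [this]; simp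
    have h3 : (↑h⁻¹ : Module.End ℂ V) * u j = e (y j) • (u j * ↑h⁻¹) := by
      simpa [mul_assoc] using h2
    rw [h3, smul_smul, Pi.neg_apply, ← AddChar.map_add_eq_mul]
    simp
  have hHP : ∀ h ∈ H, ∃ x, P h (M x) := by
    intro h hh
    induction hh using Subgroup.closure_induction with
    | mem x hx => obtain ⟨i, rfl⟩ := hx; exact ⟨Pi.single i 1, fun j => hu i j⟩
    | one => exact ⟨0, by rw [map_zero]; exact P1⟩
    | mul a b _ _ ha hb =>
      obtain ⟨x, hx⟩ := ha; obtain ⟨y, hy⟩ := hb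
      exact ⟨x + y, by rw [map_add]; exact Pmul _ _ _ _ hx hy⟩
    | inv a _ ha => obtain ⟨x, hx⟩ := ha; exact ⟨-x, by rw [map_neg]; exact Pinv _ _ hx⟩
  have hPH : ∀ x, ∃ h ∈ H, P h (M x) := by
    let K : AddSubgroup (Fin n → ZMod N) :=
      { carrier := {x | ∃ h ∈ H, P h (M x)}
        zero_mem' := ⟨1, H.one_mem, by rw [map_zero]; exact P1⟩
        add_mem' := by
          rintro a b ⟨h, hh, hp⟩ ⟨h', hh', hp'⟩
          exact ⟨h * h', H.mul_mem hh hh', by rw [map_add]; exact Pmul _ _ _ _ hp hp'⟩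
        neg_mem' := by
          rintro a ⟨h, hh, hp⟩
          exact ⟨h⁻¹, H.inv_mem hh, by rw [map_neg]; exact Pinv _ _ hp⟩ }
    have hK : ∀ i, Pi.single i 1 ∈ K := fun i => ⟨u i, hH i, fun j => hu i j⟩
    intro x
    show x ∈ K
    rw [pi_eq_sum_univ' x]
    refine K.sum_mem fun i _ => ?_
    have : x i • (Pi.single i 1 : Fin n → ZMod N) = (x i).val • (Pi.single i 1 : Fin n → ZMod N) := by
      ext j
      by_cases h : i = j
      · subst h; simp
      · simp [h]
    have h2 := K.nsmul_mem (hK i) (x i).val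
    rw [← this] at h2
    exact h2
  -- span
  let S := Submodule.span ℂ ((fun h : (Module.End ℂ V)ˣ => (h : Module.End ℂ V)) '' H)
  let B : Subalgebra ℂ (Module.End ℂ V) := Algebra.adjoin ℂ ((fun h : (Module.End ℂ V)ˣ => (h : Module.End ℂ V)) '' H)
  have hB : B = ⊤ := by
    refine cf_burnside B hne fun W hW => hirr W ?_ ?_
    · exact fun j w hw => hW _ (Algebra.subset_adjoin ⟨u j, hH j, rfl⟩) w hw
    · exact fun j w hw => hW _ (Algebra.subset_adjoin ⟨(u j)⁻¹, H.inv_mem (hH j), rfl⟩) w hw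
  have hS : S = ⊤ := by
    have h1 := Algebra.adjoin_eq_span ℂ ((fun h : (Module.End ℂ V)ˣ => (h : Module.End ℂ V)) '' H)
    have h2 : ((fun h : (Module.End ℂ V)ˣ => (h : Module.End ℂ V)) '' H) = ((H.toSubmonoid.map (Units.coeHom (Module.End ℂ V)) : Submonoid (Module.End ℂ V)) : Set (Module.End ℂ V)) := by
      ext; simp
    have h3 : Subalgebra.toSubmodule B = S := by
      show Subalgebra.toSubmodule (Algebra.adjoin ℂ _) = Submodule.span ℂ _
      rw [h1, h2, Submonoid.closure_eq]
    rw [← h3, hB]; simp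
  -- commuting with all u is scalar
  have hsc : ∀ A : (Module.End ℂ V)ˣ, P A 0 → ∃ c : ℂ, (A : Module.End ℂ V) = c • 1 := by
    intro A hA
    apply cf_scalar
    intro C
    have hC : C ∈ S := hS ▸ Submodule.mem_top
    induction hC using Submodule.span_induction with
    | mem x hx =>
      obtain ⟨h, hh, rfl⟩ := hx
      show (h : Module.End ℂ V) * A = A * h
      rw [← Units.val_mul, ← Units.val_mul]
      congr 1
      induction hh using Subgroup.closure_induction with
      | mem x hx =>
        obtain ⟨i, rfl⟩ := hx
        ext1
        simpa using hA i
      | one => simp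
      | mul a b _ _ ha hb => rw [mul_assoc, hb, ← mul_assoc, ha, mul_assoc]
      | inv a _ ha => rw [inv_mul_eq_iff_eq_mul, ← mul_assoc, ha, mul_assoc, mul_inv_cancel, mul_one]
    | zero => simp
    | add x y _ _ hx hy => rw [add_mul, mul_add, hx, hy]
    | smul c x _ hx => rw [smul_mul_assoc, mul_smul_comm, hx]
  have hch : ∀ y : M.range, ∃ h ∈ H, P h y := by
    rintro ⟨_, x, rfl⟩; exact hPH x
  choose a haH haP using hch
  have hspan : ⊤ ≤ Submodule.span ℂ (Set.range fun y => (a y : Module.End ℂ V)) := by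
    rw [← hS]
    refine Submodule.span_le.2 ?_
    rintro _ ⟨h, hh, rfl⟩
    obtain ⟨x, hx⟩ := hHP h hh
    let y : M.range := ⟨M x, x, rfl⟩
    have := Pmul _ _ _ _ (Pinv _ _ (haP y)) hx
    obtain ⟨c, hc⟩ := hsc _ (by simpa [y] using this)
    have h2 : (h : Module.End ℂ V) = c • (a y : Module.End ℂ V) := by
      have : (h : Module.End ℂ V) = a y * ↑((a y)⁻¹ * h) := by simp
      rw [this, hc]; simp
    show (h : Module.End ℂ V) ∈ _
    rw [h2]
    exact Submodule.smul_mem _ _ (Submodule.subset_span ⟨y, rfl⟩)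
  have hnt : Nontrivial V := ⟨hne.choose, 0, hne.choose_spec⟩
  have hli : LinearIndependent ℂ (fun y => (a y : Module.End ℂ V)) := by
    rw [Fintype.linearIndependent_iff]
    intro c hc y
    let χ : M.range → (FreeMonoid (Fin n) →* ℂ) := fun y => FreeMonoid.lift fun j => e (y.1 j)
    have hχ : Function.Injective χ := by
      intro y y' h
      ext j
      apply he
      simpa [χ] using DFunLike.congr_fun h (FreeMonoid.of j)
    let w : FreeMonoid (Fin n) →* (Module.End ℂ V)ˣ := FreeMonoid.lift u
    have hw : ∀ y t, (w t : Module.End ℂ V) * a y = χ y t • ((a y : Module.End ℂ V) * w t) := by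
      intro y t
      induction t using FreeMonoid.inductionOn' with
      | one => simp
      | of_mul i t ht =>
        rw [map_mul, map_mul, Units.val_mul, mul_assoc, ht, mul_smul_comm, ← mul_assoc]
        have : (w (FreeMonoid.of i) : Module.End ℂ V) * a y = χ y (FreeMonoid.of i) • ((a y : Module.End ℂ V) * w (FreeMonoid.of i)) := by
          simpa [w, χ] using haP y i
        rw [this, smul_mul_assoc, smul_smul, mul_assoc, mul_comm]
    have hz : ∀ t, ∑ y, (c y * χ y t) • (a y : Module.End ℂ V) = 0 := by
      intro t
      have h1 : (w t : Module.End ℂ V) * (∑ y, c y • (a y : Module.End ℂ V)) * ↑(w t)⁻¹ = 0 := by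
        rw [hc]; simp
      rw [← h1, Finset.mul_sum, Finset.sum_mul]
      refine Finset.sum_congr rfl fun y _ => ?_
      rw [mul_smul_comm, hw, smul_smul, smul_mul_assoc, mul_assoc, Units.mul_inv, mul_one]
    by_contra hcy
    have hay : (a y : Module.End ℂ V) ≠ 0 := (a y).ne_zero
    obtain ⟨f, hf⟩ : ∃ f : Module.Dual ℂ (Module.End ℂ V), f (a y) ≠ 0 := by
      by_contra! hcon
      exact hay ((Module.forall_dual_apply_eq_zero_iff ℂ _).1 hcon)
    have hli := (linearIndependent_monoidHom (FreeMonoid (Fin n)) ℂ).comp χ hχ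
    rw [Fintype.linearIndependent_iff] at hli
    have := hli (fun y => c y * f (a y)) (by
      ext t
      have := congrArg f (hz t)
      rw [map_sum, map_zero] at this
      simp only [map_smul, smul_eq_mul] at this
      simp only [Finset.sum_apply, Pi.smul_apply, Function.comp, smul_eq_mul, Pi.zero_apply]
      rw [← this]
      exact Finset.sum_congr rfl fun y _ => by ring) y
    exact (mul_ne_zero hcy hf) this
  have hb := Module.finrank_eq_card_basis (Module.Basis.mk hli hspan)
  rw [Nat.card_eq_fintype_card, ← hb, Module.finrank_linearMap, sq]

namespace IdealTriangulation

variable {g p n : ℕ} (T : IdealTriangulation g p n)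

theorem cf_const {Q : Type*} (c : T.D → Q) (h1 : ∀ d, c (T.α d) = c d) (h2 : ∀ d, c (T.φ d) = c d)
    (d d' : T.D) : c d = c d' := by
  obtain ⟨w, hw, rfl⟩ := T.connected d d'
  have : ∀ d, c (w d) = c d := by
    induction hw using Subgroup.closure_induction with
    | mem x hx =>
      rcases hx with rfl | hx
      · exact h1
      · rw [Set.mem_singleton_iff] at hx; subst hx; exact h2
    | one => simp
    | mul a b _ _ ha hb => intro d; rw [Equiv.Perm.mul_apply, ha, hb]
    | inv a _ ha => intro d; rw [← ha (a⁻¹ d)]; simp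
  exact (this d).symm

theorem cf_edge_α (d : T.D) : T.edge (T.α d) = T.edge d :=
  ((T.edge_fiber d (T.α d)).2 (Or.inr rfl)).symm

theorem cf_sum_edge {A : Type*} [AddCommMonoid A] (f : T.D → A) (d : T.D) :
    (∑ x : T.D, if T.edge x = T.edge d then f x else 0) = f d + f (T.α d) := by
  rw [← Finset.sum_filter]
  have : (Finset.univ.filter fun x => T.edge x = T.edge d) = {d, T.α d} := by
    ext x
    simp only [Finset.mem_filter, Finset.mem_univ, true_and, Finset.mem_insert,
      Finset.mem_singleton]
    rw [← T.edge_fiber d x]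
    exact eq_comm
  rw [this, Finset.sum_pair (T.α_fpf d).symm]

theorem cf_wp_mulVec {R : Type*} [CommRing R] (x : Fin n → R) (j : Fin n) :
    ((T.wpMatrix.map (Int.cast : ℤ → R)).mulVec x) j =
      ∑ d : T.D, if T.edge d = j then x (T.edge (T.φ d)) - x (T.edge (T.φ (T.φ d))) else 0 := by
  have key : ∀ i, (T.spikeCount j i : R) * x i =
      ∑ d : T.D, if T.edge d = j then (if T.edge (T.φ d) = i then x i else 0) else 0 := by
    intro i
    rw [spikeCount, Finset.card_filter, Nat.cast_sum, Finset.sum_mul]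
    refine Finset.sum_congr rfl fun d _ => ?_
    by_cases h1 : T.edge d = j <;> by_cases h2 : T.edge (T.φ d) = i <;> simp [h1, h2]
  have key2 : ∀ i, (T.spikeCount i j : R) * x i =
      ∑ d : T.D, if T.edge (T.φ d) = j then (if T.edge d = i then x i else 0) else 0 := by
    intro i
    rw [spikeCount, Finset.card_filter, Nat.cast_sum, Finset.sum_mul]
    refine Finset.sum_congr rfl fun d _ => ?_
    by_cases h1 : T.edge d = i <;> by_cases h2 : T.edge (T.φ d) = j <;> simp [h1, h2]
  have e1 : ((T.wpMatrix.map (Int.cast : ℤ → R)).mulVec x) j =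
      ∑ i, ((T.spikeCount j i : R) * x i - (T.spikeCount i j : R) * x i) := by
    simp [Matrix.mulVec, dotProduct, wpMatrix, sub_mul]
  rw [e1, Finset.sum_sub_distrib]
  simp_rw [key, key2]
  have e2 : ∀ d : T.D, (∑ i, if T.edge (T.φ d) = j then (if T.edge d = i then x i else 0) else 0)
      = if T.edge (T.φ d) = j then x (T.edge d) else 0 := by
    intro d; split_ifs <;> simp
  have e3 : ∀ d : T.D, (∑ i, if T.edge d = j then (if T.edge (T.φ d) = i then x i else 0) else 0)
      = if T.edge d = j then x (T.edge (T.φ d)) else 0 := by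
    intro d; split_ifs <;> simp
  have e5 : (∑ i, ∑ d : T.D, if T.edge (T.φ d) = j then (if T.edge d = i then x i else 0) else 0)
      = ∑ d : T.D, if T.edge (T.φ d) = j then x (T.edge d) else 0 := by
    rw [Finset.sum_comm]; exact Finset.sum_congr rfl fun d _ => e2 d
  have e6 : (∑ i, ∑ d : T.D, if T.edge d = j then (if T.edge (T.φ d) = i then x i else 0) else 0)
      = ∑ d : T.D, if T.edge d = j then x (T.edge (T.φ d)) else 0 := by
    rw [Finset.sum_comm]; exact Finset.sum_congr rfl fun d _ => e3 d
  rw [e5, e6]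
  have e4 : (∑ d : T.D, if T.edge (T.φ d) = j then x (T.edge d) else 0) =
      ∑ d : T.D, if T.edge d = j then x (T.edge (T.φ (T.φ d))) else 0 := by
    rw [← Equiv.sum_comp T.φ (fun d => if T.edge d = j then x (T.edge (T.φ (T.φ d))) else 0)]
    simp [T.φ_triangles]
  rw [e4, ← Finset.sum_sub_distrib]
  refine Finset.sum_congr rfl fun d _ => ?_
  split_ifs <;> simp

theorem cf_mem_ker {R : Type*} [CommRing R] (x : Fin n → R) :
    (T.wpMatrix.map (Int.cast : ℤ → R)).mulVec x = 0 ↔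
      ∀ d, x (T.edge (T.φ d)) - x (T.edge (T.φ (T.φ d))) +
        (x (T.edge (T.φ (T.α d))) - x (T.edge (T.φ (T.φ (T.α d))))) = 0 := by
  rw [funext_iff, T.edge_surj.forall]
  refine forall_congr' fun d => ?_
  rw [cf_wp_mulVec, T.cf_sum_edge (fun d => x (T.edge (T.φ d)) - x (T.edge (T.φ (T.φ d)))) d]
  rfl

/-- triangles -/
def cfSetoid : Setoid T.D where
  r d d' := d' = d ∨ d' = T.φ d ∨ d' = T.φ (T.φ d)
  iseqv := by
    refine ⟨fun d => Or.inl rfl, ?_, ?_⟩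
    · rintro d d' (rfl | rfl | rfl)
      · simp
      · simp [T.φ_triangles]
      · simp [T.φ_triangles]
    · rintro d d' d'' (rfl | rfl | rfl) (rfl | rfl | rfl) <;> simp [T.φ_triangles]

def CfFace : Type := Quotient T.cfSetoid

def cfFace (d : T.D) : T.CfFace := Quotient.mk _ d

theorem cfFace_surj : Function.Surjective T.cfFace := Quotient.mk_surjective

theorem cfFace_eq (d d' : T.D) : T.cfFace d = T.cfFace d' ↔ d' = d ∨ d' = T.φ d ∨ d' = T.φ (T.φ d) :=
  Quotient.eq

noncomputable instance : Fintype T.CfFace :=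
  @Fintype.ofFinite _ (Finite.of_surjective _ T.cfFace_surj)

noncomputable instance : DecidableEq T.CfFace := Classical.decEq _

theorem cf_face_filter (d : T.D) :
    (Finset.univ.filter fun x => T.cfFace x = T.cfFace d) = {d, T.φ d, T.φ (T.φ d)} := by
  ext x
  simp only [Finset.mem_filter, Finset.mem_univ, true_and, Finset.mem_insert,
    Finset.mem_singleton]
  rw [← T.cfFace_eq d x]
  exact eq_comm

theorem cf_φφ_ne (d : T.D) : T.φ (T.φ d) ≠ d := by
  intro h
  have := T.φ_triangles d
  rw [h] at this
  exact T.φ_fpf d this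

theorem cf_sum_face {A : Type*} [AddCommMonoid A] (f : T.D → A) (d : T.D) :
    (∑ x : T.D, if T.cfFace x = T.cfFace d then f x else 0) = f d + (f (T.φ d) + f (T.φ (T.φ d))) := by
  rw [← Finset.sum_filter, cf_face_filter, Finset.sum_insert, Finset.sum_pair (T.φ_fpf _).symm]
  simp [(T.φ_fpf d).symm, (T.cf_φφ_ne d).symm]

theorem cf_card_face : 3 * Fintype.card T.CfFace = Fintype.card T.D := by
  have := Finset.card_eq_sum_card_fiberwise (f := T.cfFace) (s := Finset.univ) (t := Finset.univ)
    (fun _ _ => Finset.mem_coe.2 (Finset.mem_univ _))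
  rw [Finset.card_univ] at this
  rw [this, Finset.sum_const_nat (m := 3), Finset.card_univ, mul_comm]
  intro f _
  obtain ⟨d, rfl⟩ := T.cfFace_surj f
  rw [cf_face_filter, Finset.card_insert_of_notMem, Finset.card_pair (T.φ_fpf _).symm]
  simp [(T.φ_fpf d).symm, (T.cf_φφ_ne d).symm]

/-- incidence matrix mod 2 -/
noncomputable def cfInc : Matrix T.CfFace (Fin n) (ZMod 2) :=
  Matrix.of fun f j => ∑ d : T.D, if T.cfFace d = f then (if T.edge d = j then 1 else 0) else 0

theorem cfInc_mulVec (z : Fin n → ZMod 2) (d : T.D) : (T.cfInc.mulVec z) (T.cfFace d) =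
    z (T.edge d) + (z (T.edge (T.φ d)) + z (T.edge (T.φ (T.φ d)))) := by
  rw [← T.cf_sum_face (fun d => z (T.edge d))]
  simp only [Matrix.mulVec, dotProduct, cfInc, Matrix.of_apply, Finset.sum_mul]
  rw [Finset.sum_comm]
  refine Finset.sum_congr rfl fun x _ => ?_
  split_ifs <;> simp

theorem cfInc_transpose_mulVec (y : T.CfFace → ZMod 2) (d : T.D) :
    (T.cfInc.transpose.mulVec y) (T.edge d) = y (T.cfFace d) + y (T.cfFace (T.α d)) := by
  rw [← T.cf_sum_edge (fun d => y (T.cfFace d))]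
  simp only [Matrix.mulVec, dotProduct, cfInc, Matrix.transpose_apply, Matrix.of_apply, Finset.sum_mul]
  rw [Finset.sum_comm]
  refine Finset.sum_congr rfl fun x _ => ?_
  split_ifs <;> simp

theorem cf_card_Z (hp : 1 ≤ p) :
    Nat.card {z : Fin n → ZMod 2 // ∀ d, z (T.edge d) + (z (T.edge (T.φ d)) + z (T.edge (T.φ (T.φ d)))) = 0}
      = 2 ^ (2 * g + p - 1) := by
  have : Fact (Nat.Prime 2) := ⟨Nat.prime_two⟩
  obtain ⟨d0, -⟩ := T.vert_surj ⟨0, hp⟩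
  let f0 := T.cfFace d0
  have hk : LinearMap.ker T.cfInc.transpose.mulVecLin = Submodule.span (ZMod 2) {fun _ => (1 : ZMod 2)} := by
    ext y
    rw [LinearMap.mem_ker, Submodule.mem_span_singleton, Matrix.mulVecLin_apply]
    constructor
    · intro h
      have hc : ∀ d d', y (T.cfFace d) = y (T.cfFace d') := by
        apply T.cf_const
        · intro d
          have := congrFun h (T.edge d)
          rw [cfInc_transpose_mulVec] at this
          exact (CharTwo.add_eq_zero.1 this).symm
        · intro d
          congr 1
          exact ((T.cfFace_eq _ _).2 (by simp)).symm
      refine ⟨y f0, ?_⟩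
      ext f
      obtain ⟨d, rfl⟩ := T.cfFace_surj f
      simpa using hc d0 d
    · rintro ⟨c, rfl⟩
      ext j
      obtain ⟨d, rfl⟩ := T.edge_surj j
      rw [cfInc_transpose_mulVec]
      simp [CharTwo.add_self_eq_zero]
  have r1 := LinearMap.finrank_range_add_finrank_ker T.cfInc.transpose.mulVecLin
  have r2 := LinearMap.finrank_range_add_finrank_ker T.cfInc.mulVecLin
  have r3 : Module.finrank (ZMod 2) (LinearMap.range T.cfInc.transpose.mulVecLin) =
    Module.finrank (ZMod 2) (LinearMap.range T.cfInc.mulVecLin) := Matrix.rank_transpose _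
  rw [hk, finrank_span_singleton (fun h => one_ne_zero (congrFun h f0)), Module.finrank_fintype_fun_eq_card] at r1
  rw [Module.finrank_fintype_fun_eq_card, Fintype.card_fin] at r2
  have c1 := T.cf_card_face
  have c2 := T.card_darts
  have c3 := T.euler
  have r4 : Module.finrank (ZMod 2) (LinearMap.ker T.cfInc.mulVecLin) = 2 * g + p - 1 := by omega
  rw [← r4]
  have := Module.natCard_eq_pow_finrank (K := ZMod 2) (V := LinearMap.ker T.cfInc.mulVecLin)
  rw [Nat.card_zmod] at this
  rw [← this]
  refine Nat.card_congr (Equiv.subtypeEquivRight fun z => ?_)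
  rw [LinearMap.mem_ker, Matrix.mulVecLin_apply, funext_iff, T.cfFace_surj.forall]
  simp_rw [cfInc_mulVec]
  rfl

end IdealTriangulation

theorem cf_card_E2 {N : ℕ} [NeZero N] (hN : Even N) :
    Nat.card (nsmulAddMonoidHom 2 : ZMod N →+ ZMod N).range * 2 = N := by
  rw [IsAddCyclic.card_nsmulAddMonoidHom_range, Nat.card_zmod,
    Nat.gcd_eq_right (even_iff_two_dvd.1 hN), Nat.div_mul_cancel (even_iff_two_dvd.1 hN)]

theorem cf_card_A2 {N : ℕ} [NeZero N] (hN : Even N) :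
    Nat.card (nsmulAddMonoidHom 2 : ZMod N →+ ZMod N).ker = 2 := by
  rw [IsAddCyclic.card_nsmulAddMonoidHom_ker, Nat.card_zmod,
    Nat.gcd_eq_right (even_iff_two_dvd.1 hN)]

theorem cf_card_even {N : ℕ} [NeZero N] (hN : Even N) (p : ℕ) :
    Nat.card {k : Fin (p + 1) → ZMod N //
      ∀ v, k v - k 0 ∈ (nsmulAddMonoidHom 2 : ZMod N →+ ZMod N).range} * 2 ^ p = N ^ (p + 1) := by
  have e : {k : Fin (p + 1) → ZMod N //
      ∀ v, k v - k 0 ∈ (nsmulAddMonoidHom 2 : ZMod N →+ ZMod N).range} ≃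
      ZMod N × (Fin p → (nsmulAddMonoidHom 2 : ZMod N →+ ZMod N).range) :=
    { toFun := fun k => (k.1 0, fun i => ⟨k.1 i.succ - k.1 0, k.2 _⟩)
      invFun := fun ab => ⟨Fin.cons ab.1 (fun i => ab.1 + (ab.2 i).1), by
        intro v
        refine Fin.cases ?_ (fun i => ?_) v
        · simpa only [Fin.cons_zero, sub_self] using AddSubgroup.zero_mem _
        · simpa only [Fin.cons_zero, Fin.cons_succ, add_sub_cancel_left] using (ab.2 i).2⟩
      left_inv := by
        rintro ⟨k, hk⟩
        ext v
        refine Fin.cases ?_ (fun i => ?_) v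
        · simp
        · simp
      right_inv := by
        rintro ⟨a, b⟩
        ext
        · simp
        · simp }
  rw [Nat.card_congr e, Nat.card_prod, Nat.card_fun, Nat.card_zmod, Nat.card_fin, mul_assoc,
    ← mul_pow, cf_card_E2 hN, pow_succ']

namespace IdealTriangulation

variable {g p n : ℕ} (T : IdealTriangulation g p n)

/-- corner sums -/
def cfH (R : Type*) [CommRing R] : (Fin n → R) →+ (T.D → R) where
  toFun x d := x (T.edge (T.φ (T.φ d))) + x (T.edge d) - x (T.edge (T.φ d))
  map_zero' := by ext; simp
  map_add' x y := by ext; simp; ring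

theorem cfH_apply (R : Type*) [CommRing R] (x : Fin n → R) (d : T.D) :
    T.cfH R x d = x (T.edge (T.φ (T.φ d))) + x (T.edge d) - x (T.edge (T.φ d)) := rfl

theorem cf_mem_ker' {R : Type*} [CommRing R] (x : Fin n → R) :
    (T.wpMatrix.map (Int.cast : ℤ → R)).mulVec x = 0 ↔
      ∀ d, T.cfH R x (T.φ (T.α d)) = T.cfH R x d := by
  rw [cf_mem_ker, T.α.surjective.forall]
  refine forall_congr' fun d => ?_
  rw [T.α_invol, cfH_apply, cfH_apply, T.φ_triangles, T.cf_edge_α]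
  constructor <;> intro h <;> linear_combination h

theorem cf_vert_const {Q : Type*} (c : T.D → Q) (h : ∀ d, c (T.φ (T.α d)) = c d) (d d' : T.D)
    (hv : T.vert d = T.vert d') : c d = c d' := by
  obtain ⟨k, rfl⟩ := T.vert_orbit d d' hv
  clear hv
  induction k with
  | zero => simp
  | succ k ih =>
    rw [pow_succ', Equiv.Perm.mul_apply]
    rw [ih]
    exact (h _).symm

theorem cf_vert_α (d : T.D) : T.vert (T.α d) = T.vert (T.φ d) := by
  have := T.vert_rot (T.α d)
  rw [T.α_invol] at this
  exact this.symm

theorem cf_card_kerH (hp : 1 ≤ p) {N : ℕ} [NeZero N] (hN : Even N) :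
    Nat.card {x : Fin n → ZMod N // T.cfH (ZMod N) x = 0} = 2 ^ (2 * g + p - 1) := by
  rw [← T.cf_card_Z hp]
  have hc := cf_card_A2 (N := N) hN
  let A := (nsmulAddMonoidHom 2 : ZMod N →+ ZMod N).ker
  have : Fact (Nat.Prime 2) := ⟨Nat.prime_two⟩
  have hcy : IsAddCyclic A := isAddCyclic_of_prime_card hc
  let e0 : ZMod (Nat.card A) ≃+ A := zmodAddCyclicAddEquiv hcy
  have hc' : Nat.card A = 2 := hc
  rw [hc'] at e0
  have two : ∀ x : Fin n → ZMod N, T.cfH (ZMod N) x = 0 → ∀ j, x j ∈ A := by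
    intro x hx j
    obtain ⟨d, rfl⟩ := T.edge_surj j
    have h1 := congrFun hx d
    have h2 := congrFun hx (T.φ d)
    rw [cfH_apply] at h1 h2
    rw [T.φ_triangles] at h2
    simp only [Pi.zero_apply] at h1 h2
    rw [AddMonoidHom.mem_ker, nsmulAddMonoidHom_apply, two_nsmul]
    linear_combination h1 + h2
  have hA : ∀ a b c : A, a + (b + c) = 0 ↔ (c : ZMod N) + a - b = 0 := by
    intro a b c
    have hb : (b : ZMod N) + b = 0 := by
      have := b.2; rw [AddMonoidHom.mem_ker, nsmulAddMonoidHom_apply, two_nsmul] at this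
      exact this
    rw [← Subtype.coe_inj]
    push_cast
    constructor <;> intro h
    · linear_combination h - hb
    · linear_combination h + hb
  refine Nat.card_congr (Equiv.symm
    { toFun := fun z => ⟨fun j => e0 (z.1 j), ?_⟩
      invFun := fun x => ⟨fun j => e0.symm ⟨x.1 j, two _ x.2 j⟩, ?_⟩
      left_inv := ?_
      right_inv := ?_ })
  · ext d
    rw [cfH_apply, Pi.zero_apply, ← hA, ← map_add, ← map_add, z.2 d, map_zero]
  · intro d
    rw [← map_add, ← map_add, (hA _ _ _).2, map_zero]
    exact congrFun x.2 d
  · intro z; ext j; simp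
  · intro x; ext j; simp

theorem cf_range_iff {p : ℕ} (T : IdealTriangulation g (p + 1) n) {N : ℕ} [NeZero N]
    (h : T.D → ZMod N) :
    (∃ x, T.cfH (ZMod N) x = h ∧ ∀ d, h (T.φ (T.α d)) = h d) ↔
    ∃ k : Fin (p + 1) → ZMod N, (∀ v, k v - k 0 ∈ (nsmulAddMonoidHom 2 : ZMod N →+ ZMod N).range) ∧
      h = k ∘ T.vert := by
  constructor
  · rintro ⟨x, rfl, hx⟩
    obtain ⟨s, hs⟩ := T.vert_surj.hasRightInverse
    refine ⟨fun v => T.cfH (ZMod N) x (s v), ?_, ?_⟩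
    · intro v
      have h2 : ∀ d, (QuotientAddGroup.mk (T.cfH (ZMod N) x (T.φ d)) :
          ZMod N ⧸ (nsmulAddMonoidHom 2 : ZMod N →+ ZMod N).range) =
          QuotientAddGroup.mk (T.cfH (ZMod N) x d) := by
        intro d
        rw [eq_comm, QuotientAddGroup.eq]
        refine ⟨x (T.edge (T.φ d)) - x (T.edge (T.φ (T.φ d))), ?_⟩
        rw [nsmulAddMonoidHom_apply, cfH_apply, cfH_apply, T.φ_triangles, two_nsmul]
        ring
      have := T.cf_const (fun d => (QuotientAddGroup.mk (T.cfH (ZMod N) x d) :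
          ZMod N ⧸ (nsmulAddMonoidHom 2 : ZMod N →+ ZMod N).range))
          (fun d => by rw [← h2 (T.α d), hx]) h2 (s 0) (s v)
      rw [QuotientAddGroup.eq] at this
      rw [sub_eq_neg_add]; exact this
    · ext d
      exact T.cf_vert_const _ hx _ _ (hs _).symm
  · rintro ⟨k, hk, rfl⟩
    choose b hb using hk
    obtain ⟨s, hs⟩ := T.edge_surj.hasRightInverse
    let y : T.D → ZMod N := fun d => k 0 + b (T.vert d) + b (T.vert (T.φ d))
    have hy : ∀ d, y (s (T.edge d)) = y d := by
      intro d
      rcases (T.edge_fiber (s (T.edge d)) d).1 (hs _) with h | h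
      · rw [← h]
      · conv_rhs => rw [h]
        simp only [y]
        rw [cf_vert_α, T.vert_rot]
        ring
    refine ⟨fun j => y (s j), ?_, ?_⟩
    · ext d
      rw [cfH_apply, hy, hy, hy]
      have := hb (T.vert d)
      rw [nsmulAddMonoidHom_apply, two_nsmul] at this
      simp only [y, T.φ_triangles, Function.comp]
      linear_combination this
    · intro d; simp [T.vert_rot]

theorem cf_card_ker (hp : 1 ≤ p) {N : ℕ} [NeZero N] (hN : Even N) :
    Nat.card (T.wpMatrix.map (Int.cast : ℤ → ZMod N)).mulVecLin.toAddMonoidHom.ker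
      = N ^ p * 4 ^ g := by
  obtain ⟨p, rfl⟩ : ∃ p', p = p' + 1 := ⟨p - 1, by omega⟩
  set K := (T.wpMatrix.map (Int.cast : ℤ → ZMod N)).mulVecLin.toAddMonoidHom.ker
  have hK : ∀ x, x ∈ K ↔ ∀ d, T.cfH (ZMod N) x (T.φ (T.α d)) = T.cfH (ZMod N) x d := by
    intro x
    rw [← cf_mem_ker']; rfl
  let f : K →+ (T.D → ZMod N) := (T.cfH (ZMod N)).comp K.subtype
  have h1 := f.ker.card_mul_index
  rw [AddSubgroup.index_ker] at h1
  rw [← h1]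
  have h2 : Nat.card f.ker = 2 ^ (2 * g + (p + 1) - 1) := by
    rw [← T.cf_card_kerH hp hN]
    exact Nat.card_congr
      { toFun := fun x => ⟨x.1.1, x.2⟩
        invFun := fun x => ⟨⟨x.1, (hK _).2 (by rw [x.2]; simp)⟩, x.2⟩
        left_inv := fun _ => rfl
        right_inv := fun _ => rfl }
  have hr : ∀ h, h ∈ f.range ↔ ∃ k : Fin (p + 1) → ZMod N,
      (∀ v, k v - k 0 ∈ (nsmulAddMonoidHom 2 : ZMod N →+ ZMod N).range) ∧ h = k ∘ T.vert := by
    intro h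
    rw [← cf_range_iff]
    constructor
    · rintro ⟨x, rfl⟩
      exact ⟨x.1, rfl, (hK _).1 x.2⟩
    · rintro ⟨x, rfl, hx⟩
      exact ⟨⟨x, (hK _).2 hx⟩, rfl⟩
  have h3 : Nat.card f.range = Nat.card {k : Fin (p + 1) → ZMod N //
      ∀ v, k v - k 0 ∈ (nsmulAddMonoidHom 2 : ZMod N →+ ZMod N).range} := by
    symm
    refine Nat.card_congr (Equiv.ofBijective (fun k => ⟨k.1 ∘ T.vert, (hr _).2 ⟨k.1, k.2, rfl⟩⟩) ⟨?_, ?_⟩)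
    · intro k k' h
      exact Subtype.ext (T.vert_surj.injective_comp_right (congrArg Subtype.val h))
    · rintro ⟨h, hh⟩
      obtain ⟨k, hk, rfl⟩ := (hr _).1 hh
      exact ⟨⟨k, hk⟩, rfl⟩
  have h4 := cf_card_even hN p
  rw [h2, h3, ← h4, show 2 * g + (p + 1) - 1 = 2 * g + p by omega, pow_add, pow_mul]
  ring

end IdealTriangulation

/-- Let `q²` be a primitive `N`-th root of unity with `N` even.  Every
irreducible finite-dimensional representation of the Chekhov–Fock algebra `𝒯_λ^q` of an ideal
triangulation of a genus `g` surface with `p` punctures has dimension `N^(3g+p-3) / 2^g`. -/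
theorem chekhovFock_irreducible_rep_dim_even (g p n N : ℕ) (hp : 1 ≤ p)
    (hgp : g = 0 → 3 ≤ p) (hn : (n : ℤ) = 6 * g + 3 * p - 6)
    (T : IdealTriangulation g p n) (q : ℂ)
    (hN : Even N) (hN0 : 0 < N) (hq : IsPrimitiveRoot (q ^ 2) N)
    (V : Type*) [AddCommGroup V] [Module ℂ V] [FiniteDimensional ℂ V]
    (ρ : ChekhovFock T q →ₐ[ℂ] Module.End ℂ V) (hρ : IsIrreducibleRep ρ) :
    Module.finrank ℂ V = N ^ (3 * g + p - 3) / 2 ^ g := by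
  classical
  have : NeZero N := ⟨hN0.ne'⟩
  have hq0 : q ≠ 0 := by
    rintro rfl
    exact hq.ne_zero hN0.ne' (by simp)
  let e : AddChar (ZMod N) ℂ := AddChar.zmodChar N hq.pow_eq_one
  have he : Function.Injective e := by
    intro a b hab
    simp only [e, AddChar.zmodChar_apply] at hab
    exact ZMod.val_injective N (hq.pow_inj (ZMod.val_lt a) (ZMod.val_lt b) hab)
  have heZ : ∀ a : ℤ, e (a : ZMod N) = q ^ (2 * a) := by
    intro a
    have h1 : e 1 = q ^ 2 := by
      have := AddChar.zmodChar_apply' hq.pow_eq_one 1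
      simpa [e] using this
    have h2 := AddChar.map_zsmul_eq_zpow e a 1
    rw [zsmul_one, h1] at h2
    rw [h2, zpow_mul]
    norm_cast
  let σ : Fin n → Fin n → ℤ := fun i j => T.wpMatrix i j
  have hmi : ∀ i, (QuantumTorus.X i : QuantumTorus n q σ) * QuantumTorus.Xinv i = 1 := by
    intro i
    have := RingQuot.mkAlgHom_rel ℂ (QTRel.mul_inv (q := q) (σ := σ) i)
    rwa [map_mul, map_one] at this
  have him : ∀ i, (QuantumTorus.Xinv i : QuantumTorus n q σ) * QuantumTorus.X i = 1 := by
    intro i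
    have := RingQuot.mkAlgHom_rel ℂ (QTRel.inv_mul (q := q) (σ := σ) i)
    rwa [map_mul, map_one] at this
  have hco : ∀ i j, (QuantumTorus.X i : QuantumTorus n q σ) * QuantumTorus.X j =
      (q ^ (2 * σ i j) : ℂ) • ((QuantumTorus.X j : QuantumTorus n q σ) * QuantumTorus.X i) := by
    intro i j
    have := RingQuot.mkAlgHom_rel ℂ (QTRel.comm (q := q) (σ := σ) i j)
    rwa [map_mul, map_smul, map_mul] at this
  let u : Fin n → (Module.End ℂ V)ˣ := fun i =>
    { val := ρ (QuantumTorus.X i)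
      inv := ρ (QuantumTorus.Xinv i)
      val_inv := by rw [← map_mul]; exact (congrArg ρ (hmi i)).trans (map_one ρ)
      inv_val := by rw [← map_mul]; exact (congrArg ρ (him i)).trans (map_one ρ) }
  let M := (T.wpMatrix.map (Int.cast : ℤ → ZMod N)).mulVecLin.toAddMonoidHom
  have hd := cf_dim e he u M (by
    intro i j
    have h1 : M (Pi.single i 1) j = ((T.wpMatrix j i : ℤ) : ZMod N) := by
      simp [M]
    rw [h1, heZ]
    show ρ (QuantumTorus.X j) * ρ (QuantumTorus.X i) =
      _ • (ρ (QuantumTorus.X i) * ρ (QuantumTorus.X j))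
    rw [← map_mul, ← map_mul, ← map_smul]
    exact congrArg ρ (hco j i)) hρ.1 (by
    intro W h1 h2
    refine hρ.2 W ?_
    intro a
    obtain ⟨a, rfl⟩ := RingQuot.mkAlgHom_surjective ℂ _ a
    induction a using FreeAlgebra.induction with
    | grade0 r =>
      intro w hw
      rw [AlgHom.commutes, AlgHom.commutes]
      exact W.smul_mem r hw
    | grade1 x =>
      rcases x with i | i
      · exact h1 i
      · exact h2 i
    | mul a b ha hb =>
      intro w hw
      rw [map_mul, map_mul]
      exact ha _ (hb _ hw)
    | add a b ha hb =>
      intro w hw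
      rw [map_add, map_add]
      exact W.add_mem (ha _ hw) (hb _ hw))
  have hk := T.cf_card_ker hp (N := N) hN
  have hi := M.ker.card_mul_index
  rw [AddSubgroup.index_ker, ← hd, Nat.card_fun, Nat.card_zmod, Nat.card_fin] at hi
  have hk' : Nat.card M.ker = N ^ p * 4 ^ g := hk
  rw [hk'] at hi
  have hle : 3 ≤ 3 * g + p := by
    rcases Nat.eq_zero_or_pos g with h | h
    · have := hgp h; omega
    · omega
  have hn' : n = p + 2 * (3 * g + p - 3) := by omega
  rw [hn', pow_add, mul_assoc] at hi
  have hi2 := Nat.eq_of_mul_eq_mul_left (pow_pos hN0 p) hi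
  have hi3 : (Module.finrank ℂ V * 2 ^ g) ^ 2 = (N ^ (3 * g + p - 3)) ^ 2 := by
    rw [← pow_mul, mul_comm _ 2, ← hi2, mul_pow, ← pow_mul, mul_comm g 2, pow_mul]
    ring
  have hi4 := Nat.pow_left_injective (n := 2) (by norm_num) hi3
  rw [← hi4, Nat.mul_div_cancel _ (by positivity)]
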